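/- Every M ∈ Γ_s^(2) with M₂₁ = M₃₁ = 0 can be written as ε·W, where ε ∈ {1,−1} and W is a finite product of the matrices R₁ = [[1,0,0],[0,−1,0],[0,0,1]], R₂ = [[1,2,−2],[0,−1,2],[0,0,1]], R₃ = [[1,−i√2,−1],[0,−1,i√2],[0,0,1]], T = [[1,0,i/√2],[0,1,0],[0,0,1]] and their inverses. In other words, the stabilizer of q_∞ in Γ_s^(2) is generated, modulo ±I, by R₁, R₂, R₃ and T. -/

import Mathlib

noncomputable section

open Matrix

/-- The Hermitian form matrix `J`. -/
def matJ : Matrix (Fin 3) (Fin 3) ℂ := !![0,0,1; 0,1,0; 1,0,0]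

/-- Membership in `U(2,1;J)`. -/
def inU21 (M : Matrix (Fin 3) (Fin 3) ℂ) : Prop := IsUnit M ∧ Mᴴ * matJ * M = matJ

/-- `i√2`. -/
def isq2 : ℂ := Complex.I * (Real.sqrt 2 : ℂ)

/-- Membership in the ring of integers `O₂ = ℤ + ℤ·i√2`. -/
def inO2 (z : ℂ) : Prop := ∃ a b : ℤ, z = (a : ℂ) + (b : ℂ) * isq2

/-- The sister group `Γ_s^(2)`. -/
def GammaS2 (M : Matrix (Fin 3) (Fin 3) ℂ) : Prop :=
  inU21 M ∧ inO2 (M 0 0) ∧ inO2 (M 0 1) ∧ inO2 (M 1 1) ∧ inO2 (M 1 2) ∧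
    inO2 (M 2 2) ∧ inO2 (isq2 * M 0 2) ∧ inO2 (M 1 0 / isq2) ∧
    inO2 (M 2 0 / isq2) ∧ inO2 (M 2 1 / isq2)

def R₁ : Matrix (Fin 3) (Fin 3) ℂ := !![1,0,0; 0,-1,0; 0,0,1]

def R₂ : Matrix (Fin 3) (Fin 3) ℂ := !![1,2,-2; 0,-1,2; 0,0,1]

def R₃ : Matrix (Fin 3) (Fin 3) ℂ :=
  !![1, -(Complex.I * (Real.sqrt 2 : ℂ)), -1;
     0, -1, Complex.I * (Real.sqrt 2 : ℂ);
     0, 0, 1]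

def T : Matrix (Fin 3) (Fin 3) ℂ :=
  !![1, 0, Complex.I / (Real.sqrt 2 : ℂ); 0, 1, 0; 0, 0, 1]

theorem isq2_sq : isq2 * isq2 = -2 := by
  have h : (Real.sqrt 2 : ℂ) * (Real.sqrt 2 : ℂ) = 2 := by
    rw [← Complex.ofReal_mul, Real.mul_self_sqrt (by norm_num)]; norm_num
  unfold isq2
  linear_combination (Complex.I * Complex.I) * h + 2 * Complex.I_mul_I

theorem isq2_ne : isq2 ≠ 0 := by
  intro h
  have := isq2_sq
  rw [h] at this
  norm_num at this

theorem isq2_conj : (starRingEnd ℂ) isq2 = -isq2 := by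
  simp [isq2]

theorem conj_two : (starRingEnd ℂ) 2 = 2 := map_ofNat _ 2

theorem T_entry : Complex.I / (Real.sqrt 2 : ℂ) = isq2 / 2 := by
  have h : (Real.sqrt 2 : ℂ) * (Real.sqrt 2 : ℂ) = 2 := by
    rw [← Complex.ofReal_mul, Real.mul_self_sqrt (by norm_num)]; norm_num
  have h0 : (Real.sqrt 2 : ℂ) ≠ 0 := by
    intro h0; rw [h0] at h; norm_num at h
  unfold isq2
  field_simp
  linear_combination -h

/-- The integral Heisenberg translations. -/
def Nm (m q k : ℤ) : Matrix (Fin 3) (Fin 3) ℂ :=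
  !![1, -2 * (m : ℂ) + (q : ℂ) * isq2, -2 * (m : ℂ) ^ 2 - (q : ℂ) ^ 2 + (k : ℂ) * (isq2 / 2);
     0, 1, 2 * (m : ℂ) + (q : ℂ) * isq2;
     0, 0, 1]

theorem Nm_mul (m q k m' q' k' : ℤ) :
    Nm m q k * Nm m' q' k' =
      Nm (m + m') (q + q') (k + k' - 4 * m * q' + 4 * q * m') := by
  ext i j
  fin_cases i <;> fin_cases j <;>
    simp [Nm, Matrix.mul_apply, Fin.sum_univ_three]
  · ring
  · linear_combination ((q : ℂ) * q') * isq2_sq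
  · ring

/-- The generators together with their inverses. -/
abbrev gens : Set (Matrix (Fin 3) (Fin 3) ℂ) :=
  {R₁, R₂, R₃, T, R₁⁻¹, R₂⁻¹, R₃⁻¹, T⁻¹}

theorem R₁_mem : R₁ ∈ Submonoid.closure gens := Submonoid.subset_closure (by simp [gens])
theorem R₂_mem : R₂ ∈ Submonoid.closure gens := Submonoid.subset_closure (by simp [gens])
theorem R₃_mem : R₃ ∈ Submonoid.closure gens := Submonoid.subset_closure (by simp [gens])

theorem T_eq : T = Nm 0 0 1 := by
  unfold T Nm
  rw [T_entry]
  simp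

theorem Nm_zero : Nm 0 0 0 = 1 := by
  ext i j
  fin_cases i <;> fin_cases j <;> simp [Nm]

theorem A_pos : R₂ * R₁ = Nm 1 0 0 := by
  ext i j
  fin_cases i <;> fin_cases j <;> simp [Nm, R₁, R₂, Matrix.mul_apply, Fin.sum_univ_three]

theorem A_neg : R₁ * R₂ = Nm (-1) 0 0 := by
  ext i j
  fin_cases i <;> fin_cases j <;> simp [Nm, R₁, R₂, Matrix.mul_apply, Fin.sum_univ_three]

theorem B_pos : R₃ * R₁ = Nm 0 1 0 := by
  ext i j
  fin_cases i <;> fin_cases j <;> simp [Nm, R₁, R₃, isq2, Matrix.mul_apply, Fin.sum_univ_three]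

theorem B_neg : R₁ * R₃ = Nm 0 (-1) 0 := by
  ext i j
  fin_cases i <;> fin_cases j <;> simp [Nm, R₁, R₃, isq2, Matrix.mul_apply, Fin.sum_univ_three]

theorem T_inv : T⁻¹ = Nm 0 0 (-1) := by
  apply Matrix.inv_eq_right_inv
  rw [T_eq, Nm_mul, ← Nm_zero]
  norm_num

theorem memA (m : ℤ) : Nm m 0 0 ∈ Submonoid.closure gens := by
  induction m using Int.induction_on with
  | zero => rw [Nm_zero]; exact one_mem _
  | succ n ih =>
    have := mul_mem ih (A_pos ▸ mul_mem R₂_mem R₁_mem)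
    rw [Nm_mul] at this
    simpa using this
  | pred n ih =>
    have := mul_mem ih (A_neg ▸ mul_mem R₁_mem R₂_mem)
    rw [Nm_mul] at this
    simpa [sub_eq_add_neg] using this

theorem memB (m : ℤ) : Nm 0 m 0 ∈ Submonoid.closure gens := by
  induction m using Int.induction_on with
  | zero => rw [Nm_zero]; exact one_mem _
  | succ n ih =>
    have := mul_mem ih (B_pos ▸ mul_mem R₃_mem R₁_mem)
    rw [Nm_mul] at this
    simpa using this
  | pred n ih =>
    have := mul_mem ih (B_neg ▸ mul_mem R₁_mem R₃_mem)
    rw [Nm_mul] at this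
    simpa [sub_eq_add_neg] using this

theorem memT (m : ℤ) : Nm 0 0 m ∈ Submonoid.closure gens := by
  induction m using Int.induction_on with
  | zero => rw [Nm_zero]; exact one_mem _
  | succ n ih =>
    have hT : T ∈ Submonoid.closure gens := Submonoid.subset_closure (by simp [gens])
    rw [T_eq] at hT
    have := mul_mem ih hT
    rw [Nm_mul] at this
    simpa using this
  | pred n ih =>
    have hT : T⁻¹ ∈ Submonoid.closure gens := Submonoid.subset_closure (by simp [gens])
    rw [T_inv] at hT
    have := mul_mem ih hT
    rw [Nm_mul] at this
    simpa [sub_eq_add_neg] using this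

theorem memN (m q k : ℤ) : Nm m q k ∈ Submonoid.closure gens := by
  have := mul_mem (mul_mem (memA m) (memB q)) (memT (k + 4 * m * q))
  rw [Nm_mul, Nm_mul] at this
  convert this using 2 <;> ring

theorem unit_of_norm {p q n : ℤ} (hn : 0 ≤ n) (h : (p ^ 2 + 2 * q ^ 2) * n = 1) :
    (p = 1 ∨ p = -1) ∧ q = 0 := by
  have h1 : p ^ 2 + 2 * q ^ 2 = 1 := by
    rcases Int.eq_one_or_neg_one_of_mul_eq_one h with h1 | h1
    · exact h1
    · nlinarith [sq_nonneg p, sq_nonneg q]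
  have hq : q = 0 := by
    by_contra hq
    have : 0 < q ^ 2 := by positivity
    nlinarith [sq_nonneg p]
  subst hq
  refine ⟨?_, rfl⟩
  have h2 : (p - 1) * (p + 1) = 0 := by linarith
  rcases mul_eq_zero.1 h2 with h3 | h3
  · left; linarith
  · right; linarith

theorem unit_of_mul {a g : ℂ} (ha : inO2 a) (hg : inO2 g)
    (h : (starRingEnd ℂ) a * g = 1) : (a = 1 ∧ g = 1) ∨ (a = -1 ∧ g = -1) := by
  obtain ⟨p, q, rfl⟩ := ha
  obtain ⟨p', q', rfl⟩ := hg
  have h2 := congrArg (starRingEnd ℂ) h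
  simp [isq2_conj] at h h2
  have h3 : ((p : ℂ) ^ 2 + 2 * q ^ 2) * ((p' : ℂ) ^ 2 + 2 * q' ^ 2) = 1 := by
    have e1 : (p : ℂ) ^ 2 + 2 * q ^ 2 = (p + q * isq2) * (p - q * isq2) := by
      linear_combination (q : ℂ) ^ 2 * isq2_sq
    have e2 : (p' : ℂ) ^ 2 + 2 * q' ^ 2 = (p' + q' * isq2) * (p' - q' * isq2) := by
      linear_combination (q' : ℂ) ^ 2 * isq2_sq
    rw [e1, e2]
    linear_combination (p + q * isq2) * (p' - q' * isq2) * h + h2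
  have h4 : (p ^ 2 + 2 * q ^ 2) * (p' ^ 2 + 2 * q' ^ 2) = 1 := by exact_mod_cast h3
  obtain ⟨hp, hq⟩ := unit_of_norm (by positivity) h4
  subst hq
  rcases hp with hp | hp <;> subst hp <;> simp at h ⊢
  · left; exact h
  · right; linear_combination -h

theorem key {a b c d e g : ℂ} (ha : inO2 a) (hd : inO2 d) (he : inO2 e) (hg : inO2 g)
    (hc : inO2 (isq2 * c))
    (h1 : (starRingEnd ℂ) a * g = 1) (h2 : (starRingEnd ℂ) d * d = 1)
    (h3 : (starRingEnd ℂ) b * g + (starRingEnd ℂ) d * e = 0)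
    (h4 : (starRingEnd ℂ) c * g + (starRingEnd ℂ) e * e + (starRingEnd ℂ) g * c = 0) :
    ∃ (ε : ℂ) (W : Matrix (Fin 3) (Fin 3) ℂ), (ε = 1 ∨ ε = -1) ∧
      W ∈ Submonoid.closure gens ∧ !![a, b, c; 0, d, e; 0, 0, g] = ε • W := by
  have hag := unit_of_mul ha hg h1
  have hdd := unit_of_mul hd hd h2
  obtain ⟨p, q, rfl⟩ := he
  obtain ⟨x, y, hc⟩ := hc
  have hc' : c = y - x * (isq2 / 2) := by
    apply mul_left_cancel₀ isq2_ne
    linear_combination hc + (x : ℂ) / 2 * isq2_sq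
  clear hc
  subst hc'
  have h3' := congrArg (starRingEnd ℂ) h3
  clear h3
  have hp : ∀ γ : ℤ, (γ : ℂ) = g → 2 * γ * y + p ^ 2 + 2 * q ^ 2 = 0 := by
    rintro γ rfl
    simp [isq2_conj, conj_two] at h4
    have : 2 * (γ : ℂ) * y + p ^ 2 + 2 * q ^ 2 = 0 := by
      linear_combination h4 + (q : ℂ) ^ 2 * isq2_sq
    exact_mod_cast this
  have hev : ∀ γ : ℤ, 2 * γ * y + p ^ 2 + 2 * q ^ 2 = 0 → ∃ m, p = 2 * m := by
    intro γ h
    have : Even (p ^ 2) := ⟨-(γ * y + q ^ 2), by linarith⟩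
    rw [Int.even_pow] at this
    obtain ⟨m, hm⟩ := this.1
    exact ⟨m, by linarith⟩
  have fin : ∀ γ δ : ℤ, (γ = 1 ∨ γ = -1) → (δ = 1 ∨ δ = -1) → a = γ → g = γ → d = δ →
      ∃ (ε : ℂ) (W : Matrix (Fin 3) (Fin 3) ℂ), (ε = 1 ∨ ε = -1) ∧
      W ∈ Submonoid.closure gens ∧
      !![a, b, y - x * (isq2 / 2); 0, d, p + q * isq2; 0, 0, g] = ε • W := by
    intro γ δ hγ hδ ea eg ed
    have hy := hp γ eg.symm
    obtain ⟨m, rfl⟩ := hev γ hy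
    subst ea eg ed
    have hyc : 2 * (γ : ℂ) * y + (2 * m) ^ 2 + 2 * q ^ 2 = 0 := by exact_mod_cast hy
    simp [isq2_conj, conj_two] at h3'
    clear hp hev hy h4 h1 h2 ha hd hg hag hdd
    rcases hγ with rfl | rfl <;> rcases hδ with rfl | rfl
    · refine ⟨1, _, Or.inl rfl, memN m q (-x), ?_⟩
      ext i j
      fin_cases i <;> fin_cases j <;> simp [Nm] <;> push_cast at * <;> grind
    · refine ⟨1, _, Or.inl rfl, mul_mem R₁_mem (memN (-m) (-q) (-x)), ?_⟩
      ext i j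
      fin_cases i <;> fin_cases j <;>
        simp [Nm, R₁, Matrix.mul_apply, Fin.sum_univ_three] <;> push_cast at * <;> grind
    · refine ⟨-1, _, Or.inr rfl, mul_mem R₁_mem (memN m q x), ?_⟩
      ext i j
      fin_cases i <;> fin_cases j <;>
        simp [Nm, R₁, Matrix.mul_apply, Fin.sum_univ_three] <;> push_cast at * <;> grind
    · refine ⟨-1, _, Or.inr rfl, memN (-m) (-q) x, ?_⟩
      ext i j
      fin_cases i <;> fin_cases j <;>
        simp [Nm, R₁, Matrix.mul_apply, Fin.sum_univ_three] <;> push_cast at * <;> grind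
  rcases hag with ⟨h, h'⟩ | ⟨h, h'⟩ <;> rcases hdd with ⟨h5, -⟩ | ⟨h5, -⟩
  · exact fin 1 1 (by simp) (by simp) (by simp [h]) (by simp [h']) (by simp [h5])
  · exact fin 1 (-1) (by simp) (by simp) (by simp [h]) (by simp [h']) (by simp [h5])
  · exact fin (-1) 1 (by simp) (by simp) (by simp [h]) (by simp [h']) (by simp [h5])
  · exact fin (-1) (-1) (by simp) (by simp) (by simp [h]) (by simp [h']) (by simp [h5])

/-- The stabilizer of `q_∞` in `Γ_s^(2)` is generated, modulo `±I`, by `R₁, R₂, R₃, T`. -/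
theorem gammaS2_stabilizer_generated (M : Matrix (Fin 3) (Fin 3) ℂ) (hM : GammaS2 M)
    (h21 : M 1 0 = 0) (h31 : M 2 0 = 0) :
    ∃ (ε : ℂ) (L : List (Matrix (Fin 3) (Fin 3) ℂ)),
      (ε = 1 ∨ ε = -1) ∧
      (∀ A ∈ L, A ∈ ({R₁, R₂, R₃, T, R₁⁻¹, R₂⁻¹, R₃⁻¹, T⁻¹} :
        Set (Matrix (Fin 3) (Fin 3) ℂ))) ∧
      M = ε • L.prod := by
  obtain ⟨⟨-, hJ⟩, ha, -, hd, he, hg, hc, -, -, -⟩ := hM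
  have E := fun i j => congrFun (congrFun hJ i) j
  have e02 := E 0 2
  have e01 := E 0 1
  have e11 := E 1 1
  have e12 := E 1 2
  have e22 := E 2 2
  simp [matJ, Matrix.mul_apply, Fin.sum_univ_three, h21, h31] at e02 e01 e11 e12 e22
  have ha0 : M 0 0 ≠ 0 := by
    intro h
    simp [h] at e02
  have h32 : M 2 1 = 0 := by
    rcases e01 with h | h
    · exact absurd h ha0
    · exact h
  simp [h32] at e11 e12
  obtain ⟨ε, W, hε, hW, hMW⟩ := key ha hd he hg hc e02 (by linear_combination e11)
    (b := M 0 1) (by linear_combination e12) (by linear_combination e22)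
  obtain ⟨L, hL, rfl⟩ := Submonoid.exists_list_of_mem_closure hW
  refine ⟨ε, L, hε, hL, ?_⟩
  rw [← hMW]
  ext i j
  fin_cases i <;> fin_cases j <;> simp [h21, h31, h32]
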